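/- arXiv:2103.04368 — 2 statements merged into one kernel-verified Lean document; each statement's English description precedes it below -/
import Mathlib

section
/- For all g, h ∈ W, the Cotlar-type identity P_{≥2}[T_π(g) T_π^op(h)] = P_{≥2}[T_π(g T_π^op(h)) + T_π^op(T_π(g) h) − T_π T_π^op(gh)] holds. -/
open scoped BigOperators ENNReal

universe u

/-- Ambient data for (the weak*-dense part of) an amalgamated free product
`(A, τ) = *_{i ∈ I, B} (A_i, τ_i)` of finite von Neumann algebras `A_i` with normal faithful
normalized traces over a common von Neumann subalgebra `B`, together with the trace-preserving
conditional expectation `E : A → B` and the family of noncommutative `L_p`-(matrix) norms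
(encoding Pisier's natural operator space structure on `L_p(A)`); the carrier `A` plays the
role of the weak*-dense *-subalgebra `W`, which is linearly spanned by `B` together with the
reduced words in the centered parts of the `A_i`. -/
structure AmalgSetting : Type (u + 1) where
  I : Type u
  A : Type u
  [ringA : Ring A]
  [algA : Algebra ℂ A]
  [starA : StarRing A]
  [smodA : StarModule ℂ A]
  B : Subalgebra ℂ A
  Ai : I → Subalgebra ℂ A
  B_le : ∀ i, B ≤ Ai i
  star_B : ∀ x ∈ B, star x ∈ B
  star_Ai : ∀ i, ∀ x ∈ Ai i, star x ∈ Ai i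
  E : A →ₗ[ℂ] A
  E_mem : ∀ x, E x ∈ B
  E_fix : ∀ x ∈ B, E x = x
  E_bimod : ∀ b₁ ∈ B, ∀ b₂ ∈ B, ∀ x, E (b₁ * x * b₂) = b₁ * E x * b₂
  E_star : ∀ x, E (star x) = star (E x)
  tr : A →ₗ[ℂ] ℂ
  tr_one : tr 1 = 1
  tr_comm : ∀ x y, tr (x * y) = tr (y * x)
  tr_E : ∀ x, tr (E x) = tr x
  tr_pos : ∀ x, 0 ≤ (tr (star x * x)).re
  tr_faithful : ∀ x, tr (star x * x) = 0 → x = 0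
  N : ℝ≥0∞ → (n : ℕ) → Matrix (Fin n) (Fin n) A → ℝ
  N_nonneg : ∀ p n x, 0 ≤ N p n x
  N_add : ∀ p n x y, 1 ≤ p → N p n (x + y) ≤ N p n x + N p n y
  N_smul : ∀ p n (c : ℂ) x, N p n (c • x) = ‖c‖ * N p n x
  N_two : ∀ n (x : Matrix (Fin n) (Fin n) A),
    N 2 n x ^ 2 = ∑ k, ∑ l, (tr (star (x k l) * x k l)).re
  span_words : ∀ x : A, x ∈ Submodule.span ℂ
      ((B : Set A) ∪ {y | ∃ w : List I, w.Chain' (· ≠ ·) ∧ ∃ a : Fin w.length → A,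
        (∀ j, a j ∈ Ai (w.get j) ∧ E (a j) = 0) ∧ y = (List.ofFn a).prod})

attribute [instance] AmalgSetting.ringA AmalgSetting.algA AmalgSetting.starA AmalgSetting.smodA

namespace AmalgSetting

variable (S : AmalgSetting)

/-- The centered part `Å_i = {x ∈ A_i : E x = 0}` of `A_i`. -/
def cent (i : S.I) : Set S.A := {x | x ∈ S.Ai i ∧ S.E x = 0}

/-- `x` is an elementary tensor `a_1 ⊗ ⋯ ⊗ a_n` (realized in `A` as the product
`a_1 ⋯ a_n` of centered letters) along the word `w = (i_1, …, i_n)`. -/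
def IsElemWord (w : List S.I) (x : S.A) : Prop :=
  ∃ a : Fin w.length → S.A, (∀ j, a j ∈ S.cent (w.get j)) ∧ x = (List.ofFn a).prod

/-- A reduced word: adjacent indices are distinct. -/
def Reduced (w : List S.I) : Prop := w.Chain' (· ≠ ·)

/-- The summand `W_{(i_1,…,i_n)} = Å_{i_1} ⊗_B ⋯ ⊗_B Å_{i_n}` of `W` (and `W_{()} = B`). -/
def Wword : List S.I → Submodule ℂ S.A
  | [] => Subalgebra.toSubmodule S.B
  | w => Submodule.span ℂ {x | S.IsElemWord w x}

/-- The homogeneous part `W_n` of `W`. -/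
def Wn (n : ℕ) : Submodule ℂ S.A :=
  ⨆ (w : List S.I) (_ : w.length = n ∧ S.Reduced w), S.Wword w

/-- The scalar `L_p`-norm. -/
def nrm (p : ℝ≥0∞) (x : S.A) : ℝ := S.N p 1 (fun _ _ => x)

/-- `T` is completely bounded on `L_p(A)` with cb-norm at most `C`, i.e. all matrix
amplifications of `T` are bounded by `C` (so that the bounded linear extension of `T` to
`L_p(A)` is completely bounded with `‖T‖_{cb(L_p(A))} ≤ C`). -/
def IsCBWith (p : ℝ≥0∞) (T : S.A →ₗ[ℂ] S.A) (C : ℝ) : Prop :=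
  ∀ (n : ℕ) (x : Matrix (Fin n) (Fin n) S.A), S.N p n (x.map T) ≤ C * S.N p n x

/-- `T` is completely bounded with constant `C` on the subspace `L_p(V)` of `L_p(A)`
corresponding to a subalgebra `V ⊆ A` (e.g. `V = A_i`). -/
def IsCBOnWith (p : ℝ≥0∞) (V : Subalgebra ℂ S.A) (T : S.A →ₗ[ℂ] S.A) (C : ℝ) : Prop :=
  ∀ (n : ℕ) (x : Matrix (Fin n) (Fin n) S.A), (∀ k l, x k l ∈ V) →
    S.N p n (x.map T) ≤ C * S.N p n x

end AmalgSetting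

namespace AmalgSetting

variable (S : AmalgSetting)

/-- The "opposite" companion `T^op(x) = (T(x*))*` of a map `T`. -/
def opConj (T : S.A →ₗ[ℂ] S.A) : S.A →ₗ[ℂ] S.A where
  toFun x := star (T (star x))
  map_add' x y := by simp [star_add, map_add]
  map_smul' c x := by simp [star_smul, map_smul, smul_smul]

/-- A family `π = (π_i)` of *-representations `π_i : A_i → A_i` fixing `B` pointwise
and commuting with the conditional expectation `E`. -/
structure RepFamily where
  π : S.I → S.A →ₗ[ℂ] S.A
  mem : ∀ i, ∀ x ∈ S.Ai i, π i x ∈ S.Ai i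
  map_mul : ∀ i, ∀ x ∈ S.Ai i, ∀ y ∈ S.Ai i, π i (x * y) = π i x * π i y
  map_star : ∀ i, ∀ x ∈ S.Ai i, π i (star x) = star (π i x)
  fix_B : ∀ i, ∀ b ∈ S.B, π i b = b
  E_comm : ∀ i, ∀ x ∈ S.Ai i, S.E (π i x) = S.E x

/-- `T` is the map `T_π` acting on the first letter of reduced words:
`T_π(b) = b` for `b ∈ B`, and `T_π(a_1 ⊗ ⋯ ⊗ a_n) = π_{i_1}(a_1) ⊗ a_2 ⊗ ⋯ ⊗ a_n`. -/
def IsTpi (P : S.RepFamily) (T : S.A →ₗ[ℂ] S.A) : Prop :=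
  (∀ b ∈ S.B, T b = b) ∧
  ∀ w : List S.I, S.Reduced w → ∀ a : Fin w.length → S.A,
    (∀ j, a j ∈ S.cent (w.get j)) →
    T ((List.ofFn a).prod) =
      (List.ofFn fun j : Fin w.length =>
        if (j : ℕ) = 0 then P.π (w.get j) (a j) else a j).prod

/-- `P` is the projection `P_{≥2} = Id − P_0 − P_1` onto words of length at least `2`. -/
def IsPge2 (P : S.A →ₗ[ℂ] S.A) : Prop :=
  (∀ x ∈ S.Wn 0, P x = 0) ∧ (∀ x ∈ S.Wn 1, P x = 0) ∧
  ∀ n, 2 ≤ n → ∀ x ∈ S.Wn n, P x = x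

/-- `P` is the natural projection `P_1 : W → W_1`. -/
def IsP1 (P : S.A →ₗ[ℂ] S.A) : Prop :=
  (∀ x ∈ S.Wn 1, P x = x) ∧ ∀ n, n ≠ 1 → ∀ x ∈ S.Wn n, P x = 0

/-- `Q` is the family of natural projections of `W` onto the word components
`W_{(i_1,…,i_n)}` (with `Q_{()}` the projection onto `B`, i.e. `E`). -/
def IsWordProj (Q : List S.I → S.A →ₗ[ℂ] S.A) : Prop :=
  (∀ w, S.Reduced w → ∀ x ∈ S.Wword w, Q w x = x) ∧
  (∀ w w', S.Reduced w → S.Reduced w' → w ≠ w' → ∀ x ∈ S.Wword w', Q w x = 0) ∧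
  (∀ w, ¬ S.Reduced w → Q w = 0) ∧
  (∀ x, (Function.support fun w => Q w x).Finite) ∧
  (∀ x, ∑ᶠ w, Q w x = x)

end AmalgSetting

namespace AmalgSetting

variable {S : AmalgSetting}

/-- value of a list of letters -/
def val (l : List (S.I × S.A)) : S.A := (l.map Prod.snd).prod

/-- reduced list of centered letters -/
def Good (l : List (S.I × S.A)) : Prop :=
  (∀ p ∈ l, p.2 ∈ S.cent p.1) ∧ l.IsChain (fun p q => p.1 ≠ q.1)

theorem val_nil : val ([] : List (S.I × S.A)) = 1 := rfl

theorem val_cons (p : S.I × S.A) (l : List (S.I × S.A)) : val (p :: l) = p.2 * val l := by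
  simp [val]

theorem val_snoc (p : S.I × S.A) (l : List (S.I × S.A)) : val (l ++ [p]) = val l * p.2 := by
  simp [val]

theorem Good.tail {p : S.I × S.A} {l : List (S.I × S.A)} (h : Good (p :: l)) : Good l :=
  ⟨fun q hq => h.1 q (List.mem_cons_of_mem _ hq), h.2.tail⟩

theorem Good.front {p : S.I × S.A} {l : List (S.I × S.A)} (h : Good (l ++ [p])) : Good l :=
  ⟨fun q hq => h.1 q (by simp [hq]), (List.isChain_append.1 h.2).1⟩

theorem Good.head {p : S.I × S.A} {l : List (S.I × S.A)} (h : Good (p :: l)) :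
    p.2 ∈ S.cent p.1 := h.1 p (by simp)

theorem Good.last {p : S.I × S.A} {l : List (S.I × S.A)} (h : Good (l ++ [p])) :
    p.2 ∈ S.cent p.1 := h.1 p (by simp)

theorem Good.cons_change {p : S.I × S.A} {l : List (S.I × S.A)} (h : Good (p :: l))
    {x : S.A} (hx : x ∈ S.cent p.1) : Good ((p.1, x) :: l) := by
  refine ⟨?_, ?_⟩
  · intro q hq
    rcases List.mem_cons.1 hq with rfl | hq
    · exact hx
    · exact h.tail.1 q hq
  · have := h.2
    rw [List.isChain_cons] at this ⊢
    exact this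

theorem Good.snoc_change {p : S.I × S.A} {l : List (S.I × S.A)} (h : Good (l ++ [p]))
    {x : S.A} (hx : x ∈ S.cent p.1) : Good (l ++ [(p.1, x)]) := by
  refine ⟨?_, ?_⟩
  · intro q hq
    rcases List.mem_append.1 hq with hq | hq
    · exact h.front.1 q hq
    · rw [List.mem_singleton.1 hq]; exact hx
  · have := h.2
    rw [List.isChain_append] at this ⊢
    simpa using this

theorem cent_star {i : S.I} {x : S.A} (hx : x ∈ S.cent i) : star x ∈ S.cent i :=
  ⟨S.star_Ai i x hx.1, by rw [S.E_star, hx.2, star_zero]⟩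

theorem E_mul_right (x : S.A) {b : S.A} (hb : b ∈ S.B) : S.E (x * b) = S.E x * b := by
  simpa using S.E_bimod 1 S.B.one_mem b hb x

theorem E_mul_left (x : S.A) {b : S.A} (hb : b ∈ S.B) : S.E (b * x) = b * S.E x := by
  simpa using S.E_bimod b hb 1 S.B.one_mem x

theorem cent_mul_right {i : S.I} {x b : S.A} (hx : x ∈ S.cent i) (hb : b ∈ S.B) :
    x * b ∈ S.cent i :=
  ⟨(S.Ai i).mul_mem hx.1 (S.B_le i hb), by rw [E_mul_right x hb, hx.2, zero_mul]⟩

theorem cent_mul_left {i : S.I} {x b : S.A} (hx : x ∈ S.cent i) (hb : b ∈ S.B) :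
    b * x ∈ S.cent i :=
  ⟨(S.Ai i).mul_mem (S.B_le i hb) hx.1, by rw [E_mul_left x hb, hx.2, mul_zero]⟩

theorem cent_sub {i : S.I} {x : S.A} (hx : x ∈ S.Ai i) : x - S.E x ∈ S.cent i :=
  ⟨(S.Ai i).sub_mem hx (S.B_le i (S.E_mem x)), by
    rw [map_sub, S.E_fix _ (S.E_mem x), sub_self]⟩

theorem cent_pi (P : S.RepFamily) {i : S.I} {x : S.A} (hx : x ∈ S.cent i) :
    P.π i x ∈ S.cent i :=
  ⟨P.mem i x hx.1, by rw [P.E_comm i x hx.1, hx.2]⟩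

/-- reversed adjoint word -/
def rev (l : List (S.I × S.A)) : List (S.I × S.A) := (l.map fun p => (p.1, star p.2)).reverse

theorem val_rev (l : List (S.I × S.A)) : val (rev l) = star (val l) := by
  induction l with
  | nil => simp [val, rev]
  | cons p l ih =>
    have : rev (p :: l) = rev l ++ [(p.1, star p.2)] := by simp [rev]
    rw [this, val_snoc, val_cons, star_mul, ih]

theorem Good.rev {l : List (S.I × S.A)} (h : Good l) : Good (rev l) := by
  refine ⟨?_, ?_⟩
  · intro p hp
    simp only [AmalgSetting.rev, List.mem_reverse, List.mem_map] at hp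
    obtain ⟨q, hq, rfl⟩ := hp
    exact cent_star (h.1 q hq)
  · rw [AmalgSetting.rev, List.isChain_reverse, List.isChain_map]
    exact h.2.imp (fun _ _ h => h.symm)

/-- Induction principle. -/
theorem word_induction (p : S.A → Prop) (hB : ∀ b ∈ S.B, p b)
    (hw : ∀ q l, Good (q :: l) → p (val (q :: l)))
    (h0 : ∀ x y, p x → p y → p (x + y)) (hs : ∀ (c : ℂ) x, p x → p (c • x)) (x : S.A) : p x := by
  refine Submodule.span_induction (p := fun x _ => p x) ?_ (hB 0 S.B.zero_mem)
    (fun x y _ _ => h0 x y) (fun c x _ => hs c x) (S.span_words x)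
  rintro y (hy | ⟨w, hc, a, ha, rfl⟩)
  · exact hB y hy
  · have key : ∃ l : List (S.I × S.A), Good l ∧ val l = (List.ofFn a).prod := by
      refine ⟨List.ofFn fun j => (w.get j, a j), ⟨?_, ?_⟩, ?_⟩
      · intro q hq
        obtain ⟨j, rfl⟩ := (List.mem_ofFn' _ _).1 hq
        exact ha j
      · have h2 : (List.map Prod.fst (List.ofFn fun j => (w.get j, a j))) = w := by
          rw [List.map_ofFn]; exact List.ofFn_get w
        have := (List.isChain_map (R := fun a b : S.I => a ≠ b) Prod.fst
          (l := List.ofFn fun j => (w.get j, a j))).1 (by rw [h2]; exact hc)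
        exact this
      · rw [val, List.map_ofFn]; rfl
    obtain ⟨l, hl, e⟩ := key
    rw [← e]
    cases l with
    | nil => exact hB _ S.B.one_mem
    | cons q l => exact hw q l hl

theorem opConj_apply (T : S.A →ₗ[ℂ] S.A) (x : S.A) : S.opConj T x = star (T (star x)) := rfl

section T

variable {P : S.RepFamily} {T : S.A →ₗ[ℂ] S.A}

theorem T_cons (hT : S.IsTpi P T) {q : S.I × S.A} {l : List (S.I × S.A)} (h : Good (q :: l)) :
    T (val (q :: l)) = P.π q.1 q.2 * val l := by
  have hred : S.Reduced ((q :: l).map Prod.fst) := by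
    have := (List.isChain_map (R := fun a b : S.I => a ≠ b) Prod.fst (l := q :: l)).2 h.2
    exact this
  have := hT.2 ((q :: l).map Prod.fst) hred (fun j => ((q :: l).get (j.cast (by simp))).2) ?_
  · have e1 : (List.ofFn fun j : Fin ((q :: l).map Prod.fst).length =>
        ((q :: l).get (j.cast (by simp))).2) = (q :: l).map Prod.snd := by
      apply List.ext_get
      · simp
      · intro n h1 h2; simp
    rw [e1] at this
    rw [val, this]
    have e2 : (List.ofFn fun j : Fin ((q :: l).map Prod.fst).length =>
        if (j : ℕ) = 0 then P.π (((q :: l).map Prod.fst).get j)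
          (((q :: l).get (j.cast (by simp))).2) else
        ((q :: l).get (j.cast (by simp))).2) = P.π q.1 q.2 :: l.map Prod.snd := by
      apply List.ext_get
      · simp
      · intro n h1 h2
        cases n <;> simp
    rw [e2, List.prod_cons, val]
  · intro j
    have := h.1 ((q :: l).get (j.cast (by simp))) (List.get_mem _ _)
    have e : ((q :: l).map Prod.fst).get j = ((q :: l).get (j.cast (by simp))).1 := by
      simp only [List.get_eq_getElem, List.getElem_map, Fin.val_cast]
    rw [e]
    exact this

theorem T_snoc (hT : S.IsTpi P T) {q : S.I × S.A} {l : List (S.I × S.A)} (h : Good (l ++ [q])) :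
    S.opConj T (val (l ++ [q])) = val l * P.π q.1 q.2 := by
  have hr : rev (l ++ [q]) = (q.1, star q.2) :: rev l := by simp [rev]
  have hg := h.rev
  rw [hr] at hg
  rw [opConj_apply, ← val_rev, hr, T_cons hT hg, star_mul, val_rev, star_star,
    P.map_star _ _ h.last.1, star_star]

theorem T_Ai (hT : S.IsTpi P T) {i : S.I} {x : S.A} (hx : x ∈ S.Ai i) : T x = P.π i x := by
  have h1 : T (x - S.E x) = P.π i (x - S.E x) := by
    have hg : Good [(i, x - S.E x)] := ⟨by simpa using cent_sub hx, by simp⟩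
    simpa [val] using T_cons hT hg
  have h2 := hT.1 _ (S.E_mem x)
  have h3 := P.fix_B i _ (S.E_mem x)
  rw [map_sub, map_sub, h2, h3] at h1
  exact sub_left_injective h1

theorem T'_Ai (hT : S.IsTpi P T) {i : S.I} {x : S.A} (hx : x ∈ S.Ai i) :
    S.opConj T x = P.π i x := by
  rw [opConj_apply, T_Ai hT (S.star_Ai i x hx), P.map_star i x hx, star_star]

theorem T'_B (hT : S.IsTpi P T) {b : S.A} (hb : b ∈ S.B) : S.opConj T b = b := by
  rw [opConj_apply, hT.1 _ (S.star_B b hb), star_star]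

theorem T_mul_B (hT : S.IsTpi P T) (x : S.A) {b : S.A} (hb : b ∈ S.B) : T (x * b) = T x * b := by
  refine word_induction (fun x => T (x * b) = T x * b) ?_ ?_ ?_ ?_ x
  · intro c hc
    rw [hT.1 _ (S.B.mul_mem hc hb), hT.1 c hc]
  · intro q l h
    rcases List.eq_nil_or_concat' l with rfl | ⟨m, r, rfl⟩
    · have hq := h.head
      simp only [val_cons, val_nil, mul_one]
      rw [T_Ai hT hq.1, T_Ai hT ((S.Ai q.1).mul_mem hq.1 (S.B_le _ hb)),
        P.map_mul _ _ hq.1 _ (S.B_le _ hb), P.fix_B _ _ hb]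
    · rw [← List.cons_append] at h
      have h' := h.snoc_change (cent_mul_right h.last hb)
      have e : val (q :: (m ++ [r])) * b = val (q :: (m ++ [(r.1, r.2 * b)])) := by
        simp only [val_cons, val_snoc, mul_assoc]
      rw [List.cons_append] at h h'
      rw [e, T_cons hT h', T_cons hT h]
      simp only [val_snoc, mul_assoc]
  · intro x y hx hy
    simp only [add_mul, map_add, hx, hy]
  · intro c x hx
    simp only [smul_mul_assoc, map_smul, hx]

theorem T_B_mul (hT : S.IsTpi P T) (x : S.A) {b : S.A} (hb : b ∈ S.B) : T (b * x) = b * T x := by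
  refine word_induction (fun x => T (b * x) = b * T x) ?_ ?_ ?_ ?_ x
  · intro c hc
    rw [hT.1 _ (S.B.mul_mem hb hc), hT.1 c hc]
  · intro q l h
    have h' := h.cons_change (cent_mul_left h.head hb)
    have e : b * val (q :: l) = val ((q.1, b * q.2) :: l) := by
      simp only [val_cons, mul_assoc]
    rw [e, T_cons hT h', T_cons hT h, P.map_mul _ _ (S.B_le _ hb) _ h.head.1, P.fix_B _ _ hb,
      mul_assoc]
  · intro x y hx hy
    simp only [mul_add, map_add, hx, hy]
  · intro c x hx
    simp only [mul_smul_comm, map_smul, hx]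

theorem T'_B_mul (hT : S.IsTpi P T) (x : S.A) {b : S.A} (hb : b ∈ S.B) :
    S.opConj T (b * x) = b * S.opConj T x := by
  rw [opConj_apply, star_mul, T_mul_B hT _ (S.star_B b hb), star_mul, star_star, opConj_apply]

theorem T_mul_Ai (hT : S.IsTpi P T) {q : S.I × S.A} {l : List (S.I × S.A)} (hl : l ≠ [])
    (h : Good (l ++ [q])) {x : S.A} (hx : x ∈ S.Ai q.1) : T (val l * x) = T (val l) * x := by
  have h1 : T (val l * (x - S.E x)) = T (val l) * (x - S.E x) := by
    have h' := h.snoc_change (cent_sub hx)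
    have e := val_snoc (q.1, x - S.E x) l
    simp only at e
    rw [← e]
    cases l with
    | nil => exact absurd rfl hl
    | cons r m =>
      rw [List.cons_append] at h' ⊢
      rw [T_cons hT h', T_cons hT h.front, val_snoc, mul_assoc]
  have h2 := T_mul_B hT (val l) (S.E_mem x)
  rw [mul_sub, mul_sub, map_sub, h2] at h1
  exact sub_left_injective h1

theorem T'_Ai_mul (hT : S.IsTpi P T) {q : S.I × S.A} {l : List (S.I × S.A)} (hl : l ≠ [])
    (h : Good (q :: l)) {x : S.A} (hx : x ∈ S.Ai q.1) :
    S.opConj T (x * val l) = x * S.opConj T (val l) := by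
  have hr : rev (q :: l) = rev l ++ [(q.1, star q.2)] := by simp [rev]
  have hg := h.rev
  rw [hr] at hg
  have := T_mul_Ai hT (l := rev l) (by simpa [rev] using hl) hg (S.star_Ai _ x hx)
  rw [opConj_apply, star_mul, ← val_rev, this, star_mul, star_star, val_rev, opConj_apply]

theorem T_comm (hT : S.IsTpi P T) (x : S.A) : S.opConj T (T x) = T (S.opConj T x) := by
  refine word_induction (fun x => S.opConj T (T x) = T (S.opConj T x)) ?_ ?_ ?_ ?_ x
  · intro c hc
    rw [hT.1 c hc, T'_B hT hc, hT.1 c hc]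
  · intro q l h
    rcases List.eq_nil_or_concat' l with rfl | ⟨m, r, rfl⟩
    · have hq := h.head
      simp only [val_cons, val_nil, mul_one]
      rw [T_Ai hT hq.1, T'_Ai hT hq.1, T_Ai hT (cent_pi P hq).1, T'_Ai hT (cent_pi P hq).1]
    · have h1 := h.cons_change (cent_pi P h.head)
      rw [T_cons hT h]
      rw [← List.cons_append] at h h1 ⊢
      have h2 := h.snoc_change (cent_pi P h.last)
      have e1 := T_snoc hT h1
      have e2 := T_cons hT h2
      rw [T_snoc hT h]
      rw [List.cons_append] at e1
      simp only [val_cons, val_snoc, mul_assoc, List.append_eq] at e1 e2 ⊢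
      rw [e1, e2]
  · intro x y hx hy
    simp only [map_add, hx, hy]
  · intro c x hx
    simp only [map_smul, hx]

theorem T'_Ai_mul' (hT : S.IsTpi P T) {i : S.I} {q : S.I × S.A} {l : List (S.I × S.A)}
    (h : Good (q :: l)) (hi : i ≠ q.1 ∨ l ≠ []) {x : S.A} (hx : x ∈ S.Ai i) :
    S.opConj T (x * val (q :: l)) = x * S.opConj T (val (q :: l)) := by
  by_cases hiq : i = q.1
  · have hl : l ≠ [] := by tauto
    subst hiq
    rw [val_cons, ← mul_assoc, T'_Ai_mul hT hl h ((S.Ai q.1).mul_mem hx h.head.1),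
      T'_Ai_mul hT hl h h.head.1, mul_assoc]
  · have hg : Good ((i, (0 : S.A)) :: q :: l) := by
      refine ⟨?_, ?_⟩
      · intro p hp
        rcases List.mem_cons.1 hp with rfl | hp
        · exact ⟨(S.Ai i).zero_mem, map_zero _⟩
        · exact h.1 p hp
      · rw [List.isChain_cons_cons]
        exact ⟨hiq, h.2⟩
    exact T'_Ai_mul hT (by simp) hg hx

end T

theorem Pge2_Ai {Q : S.A →ₗ[ℂ] S.A} (hQ : S.IsPge2 Q) {i : S.I} {x : S.A} (hx : x ∈ S.Ai i) :
    Q x = 0 := by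
  have h0 : S.E x ∈ S.Wn 0 := by
    refine Submodule.mem_iSup_of_mem [] (Submodule.mem_iSup_of_mem ⟨rfl, ?_⟩ ?_)
    · exact List.isChain_nil
    · exact S.E_mem x
  have h1 : x - S.E x ∈ S.Wn 1 := by
    refine Submodule.mem_iSup_of_mem [i] (Submodule.mem_iSup_of_mem ⟨rfl, ?_⟩ ?_)
    · exact List.isChain_singleton _
    · refine Submodule.subset_span ⟨fun _ => x - S.E x, ?_, by simp⟩
      intro j
      have : [i].get j = i := by simp
      rw [this]
      exact cent_sub hx
  have h2 := hQ.2.1 _ h1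
  rwa [map_sub, hQ.1 _ h0, sub_zero] at h2

/-- The Cotlar defect. -/
def defect (S : AmalgSetting) (T : S.A →ₗ[ℂ] S.A) (g h : S.A) : S.A :=
  T g * S.opConj T h - T (g * S.opConj T h) - S.opConj T (T g * h) + T (S.opConj T (g * h))

theorem defect_add_right (T : S.A →ₗ[ℂ] S.A) (g x y : S.A) :
    defect S T g (x + y) = defect S T g x + defect S T g y := by
  simp only [defect, mul_add, map_add]; abel

theorem defect_smul_right (T : S.A →ₗ[ℂ] S.A) (g x : S.A) (c : ℂ) :
    defect S T g (c • x) = c • defect S T g x := by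
  simp only [defect, mul_smul_comm, map_smul, smul_add, smul_sub]

theorem defect_add_left (T : S.A →ₗ[ℂ] S.A) (h x y : S.A) :
    defect S T (x + y) h = defect S T x h + defect S T y h := by
  simp only [defect, add_mul, map_add]; abel

theorem defect_smul_left (T : S.A →ₗ[ℂ] S.A) (h x : S.A) (c : ℂ) :
    defect S T (c • x) h = c • defect S T x h := by
  simp only [defect, smul_mul_assoc, map_smul, smul_add, smul_sub]

theorem defect_B {P : S.RepFamily} {T : S.A →ₗ[ℂ] S.A} (hT : S.IsTpi P T) {b : S.A}
    (hb : b ∈ S.B) (h : S.A) : defect S T b h = 0 := by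
  simp only [defect, hT.1 b hb, T_B_mul hT _ hb, T'_B_mul hT _ hb]
  abel

theorem defect_word {P : S.RepFamily} {T : S.A →ₗ[ℂ] S.A} (hT : S.IsTpi P T)
    {Q : S.A →ₗ[ℂ] S.A} (hQ : S.IsPge2 Q) (l : List (S.I × S.A)) :
    Good l → ∀ h, Q (defect S T (val l) h) = 0 := by
  induction l using List.reverseRecOn with
  | nil =>
    intro _ h
    rw [val_nil, defect_B hT S.B.one_mem, map_zero]
  | append_singleton l p ih =>
    intro hl h
    have hp := hl.last
    -- the case of `h` in the algebra of the last letter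
    have hA : ∀ y ∈ S.Ai p.1, Q (defect S T (val (l ++ [p])) y) = 0 := by
      intro y hy
      have hy' : S.opConj T y ∈ S.Ai p.1 := by
        rw [T'_Ai hT hy]; exact P.mem _ _ hy
      by_cases hn : l = []
      · subst hn
        have cT : ∀ z ∈ S.Ai p.1, T z ∈ S.Ai p.1 := fun z hz => by
          rw [T_Ai hT hz]; exact P.mem _ _ hz
        have cT' : ∀ z ∈ S.Ai p.1, S.opConj T z ∈ S.Ai p.1 := fun z hz => by
          rw [T'_Ai hT hz]; exact P.mem _ _ hz
        have hv : val ([] ++ [p]) = p.2 := by simp [val]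
        rw [hv]
        have m := fun {a b : S.A} => (S.Ai p.1).mul_mem (x := a) (y := b)
        refine Pge2_Ai hQ (i := p.1) ?_
        exact (S.Ai p.1).add_mem ((S.Ai p.1).sub_mem ((S.Ai p.1).sub_mem
          (m (cT _ hp.1) hy') (cT _ (m hp.1 hy'))) (cT' _ (m (cT _ hp.1) hy)))
          (cT _ (cT' _ (m hp.1 hy)))
      · have key : ∀ z ∈ S.Ai p.1, T (val (l ++ [p]) * z) = T (val (l ++ [p])) * z := by
          intro z hz
          rw [val_snoc, mul_assoc, T_mul_Ai hT hn hl ((S.Ai p.1).mul_mem hp.1 hz),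
            T_mul_Ai hT hn hl hp.1, mul_assoc]
        have : defect S T (val (l ++ [p])) y = 0 := by
          rw [defect, key _ hy', ← key _ hy, T_comm hT]; abel
        rw [this, map_zero]
    refine word_induction (fun h => Q (defect S T (val (l ++ [p])) h) = 0) ?_ ?_ ?_ ?_ h
    · intro b hb
      exact hA b (S.B_le _ hb)
    · intro q m hm
      by_cases hc : p.1 ≠ q.1 ∨ m ≠ []
      · have key : ∀ x ∈ S.Ai p.1, S.opConj T (x * val (q :: m)) =
            x * S.opConj T (val (q :: m)) := fun x hx => T'_Ai_mul' hT hm hc hx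
        by_cases hn : l = []
        · subst hn
          have hv : val ([] ++ [p]) = p.2 := by simp [val]
          have : defect S T p.2 (val (q :: m)) = 0 := by
            rw [defect, key _ hp.1, T_Ai hT hp.1, key _ (P.mem _ _ hp.1)]; abel
          rw [hv, this, map_zero]
        · have : defect S T (val (l ++ [p])) (val (q :: m)) =
              defect S T (val l) (p.2 * val (q :: m)) := by
            simp only [defect]
            rw [key _ hp.1, val_snoc, T_mul_Ai hT hn hl hp.1]
            simp only [mul_assoc]
          rw [this]
          exact ih hl.front _
      · push Not at hc
        obtain ⟨h1, rfl⟩ := hc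
        have hv : val [q] = q.2 := by simp [val]
        rw [hv]
        exact hA _ (by rw [h1]; exact hm.head.1)
    · intro x y hx hy
      rw [defect_add_right, map_add, hx, hy, add_zero]
    · intro c x hx
      rw [defect_smul_right, map_smul, hx, smul_zero]

end AmalgSetting

open AmalgSetting in
/-- Cotlar-type formula: for all `g, h ∈ W`,
`P_{≥2}[T_π(g) T_π^op(h)] = P_{≥2}[T_π(g T_π^op(h)) + T_π^op(T_π(g) h) − T_π T_π^op(gh)]`. -/
theorem cotlar_type_identity (S : AmalgSetting) (P : S.RepFamily)
    (Tpi : S.A →ₗ[ℂ] S.A) (hT : S.IsTpi P Tpi)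
    (Pge2 : S.A →ₗ[ℂ] S.A) (hP : S.IsPge2 Pge2)
    (g h : S.A) :
    Pge2 (Tpi g * S.opConj Tpi h) =
      Pge2 (Tpi (g * S.opConj Tpi h) + S.opConj Tpi (Tpi g * h)
        - Tpi (S.opConj Tpi (g * h))) := by
  have key : Pge2 (defect S Tpi g h) = 0 := by
    refine word_induction (fun g => Pge2 (defect S Tpi g h) = 0) ?_ ?_ ?_ ?_ g
    · intro b hb
      rw [defect_B hT hb, map_zero]
    · intro q l hl
      exact defect_word hT hP _ hl h
    · intro x y hx hy
      rw [defect_add_left, map_add, hx, hy, add_zero]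
    · intro c x hx
      rw [defect_smul_left, map_smul, hx, smul_zero]
  rw [← sub_eq_zero, ← map_sub, ← key]
  congr 1
  simp only [defect]
  abel
end

section
/- For all g, h ∈ W, the identity P_1(T_π(g) T_π^op(h)) = T_π[P_1(g †^{1,0} T_π^op(h))] + T_π^op[P_1(T_π(g) †^{0,1} h)] + T_π[P_1(g †^{1,1} h)] holds. -/
open scoped BigOperators ENNReal

universe u

namespace AmalgSetting

open scoped Classical

variable (S : AmalgSetting)

/-- The paraproduct `x †^{1,0} y = xy − E_ε[H_ε^op(x H_ε^op(y))]`: in terms of the word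
projections `Q`, averaging over the independent symmetric random signs `ε` keeps exactly
the components of `x · (component of y)` ending in the same algebra as that component of
`y`, so `x †^{1,0} y` collects the parts of `xy` that do **not** end in the same algebra
as `y`. -/
noncomputable def dag10 (Q : List S.I → S.A →ₗ[ℂ] S.A) (x y : S.A) : S.A :=
  x * y - ∑ᶠ (v : List S.I), ∑ᶠ (w : List S.I),
    if w.getLast? = v.getLast? then Q w (x * Q v y) else 0

/-- The paraproduct `x †^{0,1} y = xy − E_ε[H_ε(H_ε(x) y)]`, collecting the parts of `xy`
that do not start in the same algebra as `x`. -/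
noncomputable def dag01 (Q : List S.I → S.A →ₗ[ℂ] S.A) (x y : S.A) : S.A :=
  x * y - ∑ᶠ (u : List S.I), ∑ᶠ (w : List S.I),
    if w.head? = u.head? then Q w (Q u x * y) else 0

/-- The paraproduct `x †^{1,1} y = xy − x †^{1,0} y − x †^{0,1} y`. -/
noncomputable def dag11 (Q : List S.I → S.A →ₗ[ℂ] S.A) (x y : S.A) : S.A :=
  x * y - S.dag10 Q x y - S.dag01 Q x y

end AmalgSetting

namespace AmalgSetting

section Helpers

open scoped Classical

variable {S : AmalgSetting}

/-- Recursive elementary words, allowing a trailing factor in `B`. -/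
def El : List S.I → S.A → Prop
  | [], x => x ∈ S.B
  | i :: w, x => ∃ a ∈ S.cent i, ∃ x', El w x' ∧ x = a * x'

theorem cent_mul_B {i : S.I} {c b : S.A} (hc : c ∈ S.cent i) (hb : b ∈ S.B) :
    c * b ∈ S.cent i := by
  refine ⟨(S.Ai i).mul_mem hc.1 (S.B_le i hb), ?_⟩
  have h := S.E_bimod 1 S.B.one_mem b hb c
  rw [one_mul, one_mul, hc.2, zero_mul] at h
  exact h

theorem B_mul_cent {i : S.I} {c b : S.A} (hc : c ∈ S.cent i) (hb : b ∈ S.B) :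
    b * c ∈ S.cent i := by
  refine ⟨(S.Ai i).mul_mem (S.B_le i hb) hc.1, ?_⟩
  have h := S.E_bimod b hb 1 S.B.one_mem c
  rw [mul_one, mul_one, hc.2, mul_zero] at h
  exact h

theorem star_cent {i : S.I} {c : S.A} (hc : c ∈ S.cent i) : star c ∈ S.cent i := by
  refine ⟨S.star_Ai i c hc.1, ?_⟩
  rw [S.E_star, hc.2, star_zero]

theorem pi_cent (P : S.RepFamily) {i : S.I} {c : S.A} (hc : c ∈ S.cent i) :
    P.π i c ∈ S.cent i := by
  refine ⟨P.mem i c hc.1, ?_⟩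
  rw [P.E_comm i c hc.1, hc.2]

theorem El_B_mul {w : List S.I} {x b : S.A} (hb : b ∈ S.B) (hx : El w x) : El w (b * x) := by
  cases w with
  | nil => exact S.B.mul_mem hb hx
  | cons i w =>
    obtain ⟨a, ha, x', hx', rfl⟩ := hx
    exact ⟨b * a, B_mul_cent ha hb, x', hx', by rw [mul_assoc]⟩

theorem El_append {u v : List S.I} {x y : S.A} (hx : El u x) (hy : El v y) :
    El (u ++ v) (x * y) := by
  induction u generalizing x with
  | nil => exact El_B_mul hx hy
  | cons i u ih =>
    obtain ⟨a, ha, x', hx', rfl⟩ := hx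
    exact ⟨a, ha, x' * y, ih hx', by rw [mul_assoc]⟩

theorem El_split {u v : List S.I} {z : S.A} (hz : El (u ++ v) z) :
    ∃ x y, El u x ∧ El v y ∧ z = x * y := by
  induction u generalizing z with
  | nil => exact ⟨1, z, S.B.one_mem, hz, by rw [one_mul]⟩
  | cons i u ih =>
    obtain ⟨a, ha, x', hx', rfl⟩ := hz
    obtain ⟨x, y, hx, hy, rfl⟩ := ih hx'
    exact ⟨a * x, y, ⟨a, ha, x, hx, rfl⟩, hy, by rw [mul_assoc]⟩

theorem El_single {i : S.I} {c : S.A} : El [i] c ↔ c ∈ S.cent i := by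
  constructor
  · rintro ⟨a, ha, b, hb, rfl⟩
    exact cent_mul_B ha hb
  · intro h
    exact ⟨c, h, 1, S.B.one_mem, by rw [mul_one]⟩

theorem El_star {w : List S.I} {x : S.A} (hx : El w x) : El w.reverse (star x) := by
  induction w generalizing x with
  | nil => exact S.star_B x hx
  | cons i w ih =>
    obtain ⟨a, ha, x', hx', rfl⟩ := hx
    rw [List.reverse_cons, star_mul]
    exact El_append (ih hx') (El_single.2 (star_cent ha))

theorem IsElemWord_cons {i : S.I} {w : List S.I} {a x : S.A} (ha : a ∈ S.cent i)
    (hx : S.IsElemWord w x) : S.IsElemWord (i :: w) (a * x) := by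
  obtain ⟨f, hf, rfl⟩ := hx
  refine ⟨Fin.cons a f, ?_, ?_⟩
  · intro j
    refine Fin.cases ?_ (fun j => ?_) j
    · exact ha
    · exact hf j
  · simp [List.ofFn_succ]

theorem IsElemWord_nil : S.IsElemWord [] 1 :=
  ⟨fun j => 1, fun j => j.elim0, by simp⟩

theorem El_elem {w : List S.I} {x : S.A} (hw : w ≠ []) (hx : El w x) : S.IsElemWord w x := by
  induction w generalizing x with
  | nil => exact absurd rfl hw
  | cons i w ih =>
    obtain ⟨a, ha, x', hx', rfl⟩ := hx
    cases w with
    | nil =>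
      have h := IsElemWord_cons (cent_mul_B ha hx') (IsElemWord_nil (S := S))
      rwa [mul_one] at h
    | cons j w => exact IsElemWord_cons ha (ih (by simp) hx')

theorem elem_El {w : List S.I} {x : S.A} (hx : S.IsElemWord w x) : El w x := by
  induction w generalizing x with
  | nil =>
    obtain ⟨f, hf, rfl⟩ := hx
    simpa [El] using S.B.one_mem
  | cons i w ih =>
    obtain ⟨f, hf, rfl⟩ := hx
    refine ⟨f 0, hf 0, (List.ofFn fun j : Fin w.length => f j.succ).prod, ih ?_, ?_⟩
    · exact ⟨_, fun j => hf j.succ, rfl⟩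
    · simp [List.ofFn_succ]

theorem El_Wword {w : List S.I} {x : S.A} (hx : El w x) : x ∈ S.Wword w := by
  cases w with
  | nil => exact hx
  | cons i w => exact Submodule.subset_span (El_elem (by simp) hx)

theorem mem_span_El (x : S.A) :
    x ∈ Submodule.span ℂ {z | ∃ w, S.Reduced w ∧ El w z} := by
  refine Submodule.span_mono ?_ (S.span_words x)
  rintro y (hy | ⟨w, hw, a, ha, rfl⟩)
  · exact ⟨[], List.isChain_nil, hy⟩
  · exact ⟨w, hw, elem_El ⟨a, ha, rfl⟩⟩

theorem Tpi_cons {P : S.RepFamily} {T : S.A →ₗ[ℂ] S.A} (hT : S.IsTpi P T) {i : S.I}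
    {w : List S.I} (hr : S.Reduced (i :: w)) {a x : S.A} (ha : a ∈ S.cent i) (hx : El w x) :
    T (a * x) = P.π i a * x := by
  cases w with
  | nil =>
    have h := hT.2 [i] hr (fun _ => a * x) (by
      intro j
      have : j = (0 : Fin 1) := Subsingleton.elim (α := Fin 1) _ _
      subst this
      exact cent_mul_B ha hx)
    simp at h
    rw [h, P.map_mul i a ha.1 x (S.B_le i hx), P.fix_B i x hx]
  | cons k w =>
    obtain ⟨f, hf, rfl⟩ := El_elem (by simp) hx
    have h := hT.2 (i :: k :: w) hr (Fin.cons a f) (by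
      intro j
      refine Fin.cases ?_ (fun j => ?_) j
      · exact ha
      · exact hf j)
    have e1 : (List.ofFn (Fin.cons a f : Fin (i :: k :: w).length → S.A)).prod
        = a * (List.ofFn f).prod := by
      rw [show List.ofFn (Fin.cons a f : Fin (i :: k :: w).length → S.A) = a :: List.ofFn f from
        List.ofFn_cons a f, List.prod_cons]
    rw [e1] at h
    rw [h]
    change (List.ofFn (n := (k :: w).length + 1) _).prod = _
    rw [List.ofFn_succ, List.prod_cons]
    rfl

theorem Reduced_append {u v : List S.I} : S.Reduced (u ++ v) ↔
    S.Reduced u ∧ S.Reduced v ∧ ∀ x ∈ u.getLast?, ∀ y ∈ v.head?, x ≠ y :=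
  List.isChain_append

theorem Reduced_single (i : S.I) : S.Reduced [i] := List.isChain_singleton i

theorem Reduced_reverse {u : List S.I} (h : S.Reduced u) : S.Reduced u.reverse := by
  refine List.isChain_reverse.2 ?_
  exact List.IsChain.imp (fun a b hab => hab.symm) h

theorem opT_snoc {P : S.RepFamily} {T : S.A →ₗ[ℂ] S.A} (hT : S.IsTpi P T) {k : S.I}
    {v : List S.I} (hr : S.Reduced (v ++ [k])) {c y : S.A} (hc : c ∈ S.cent k) (hy : El v y) :
    S.opConj T (y * c) = y * P.π k c := by
  change star (T (star (y * c))) = _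
  have hr' := Reduced_reverse hr
  rw [List.reverse_append] at hr'
  rw [star_mul, Tpi_cons hT hr' (star_cent hc) (El_star hy), star_mul, star_star,
    P.map_star k c hc.1, star_star]

theorem opT_B {P : S.RepFamily} {T : S.A →ₗ[ℂ] S.A} (hT : S.IsTpi P T) {b : S.A}
    (hb : b ∈ S.B) : S.opConj T b = b := by
  change star (T (star b)) = _
  rw [hT.1 _ (S.star_B b hb), star_star]

theorem Tpi_El {P : S.RepFamily} {T : S.A →ₗ[ℂ] S.A} (hT : S.IsTpi P T)
    {w : List S.I} (hr : S.Reduced w) {x : S.A} (hx : El w x) : El w (T x) := by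
  cases w with
  | nil => rw [hT.1 x hx]; exact hx
  | cons i w =>
    obtain ⟨a, ha, x', hx', rfl⟩ := hx
    rw [Tpi_cons hT hr ha hx']
    exact ⟨_, pi_cent P ha, x', hx', rfl⟩

theorem opT_El {P : S.RepFamily} {T : S.A →ₗ[ℂ] S.A} (hT : S.IsTpi P T)
    {w : List S.I} (hr : S.Reduced w) {x : S.A} (hx : El w x) : El w (S.opConj T x) := by
  have := El_star (Tpi_El hT (Reduced_reverse hr) (El_star hx))
  rw [List.reverse_reverse] at this
  exact this

/-- Span of nonempty reduced words with prescribed first and last index. -/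
def Sp (S : AmalgSetting) (o o' : Option S.I) : Submodule ℂ S.A :=
  Submodule.span ℂ {z | ∃ w : List S.I, w ≠ [] ∧ S.Reduced w ∧ w.head? = o ∧
    w.getLast? = o' ∧ El w z}

/-- Span of reduced words with length different from one. -/
def Rem (S : AmalgSetting) : Submodule ℂ S.A :=
  Submodule.span ℂ {z | ∃ w : List S.I, S.Reduced w ∧ w.length ≠ 1 ∧ El w z}

theorem El_Rem {w : List S.I} (hr : S.Reduced w) (hl : w.length ≠ 1) {z : S.A} (hz : El w z) :
    z ∈ S.Rem := Submodule.subset_span ⟨w, hr, hl, hz⟩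

theorem sandwich {u v : List S.I} {o o' : Option S.I} {x y r : S.A}
    (hu : S.Reduced u) (hv : S.Reduced v)
    (h1 : ∀ i ∈ u.getLast?, o ≠ some i) (h2 : ∀ i ∈ v.head?, o' ≠ some i)
    (hx : El u x) (hy : El v y) (hr : r ∈ S.Sp o o') :
    x * r * y ∈ Submodule.span ℂ {z | ∃ w : List S.I, w ≠ [] ∧ S.Reduced (u ++ w ++ v) ∧
      w.head? = o ∧ w.getLast? = o' ∧ El (u ++ w ++ v) z} := by
  induction hr using Submodule.span_induction with
  | mem z hz =>
    obtain ⟨w, hne, hw, e1, e2, hz⟩ := hz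
    refine Submodule.subset_span ⟨w, hne, ?_, e1, e2, El_append (El_append hx hz) hy⟩
    rw [Reduced_append, Reduced_append]
    refine ⟨⟨hu, hw, ?_⟩, hv, ?_⟩
    · intro p hp q hq hpq
      subst hpq
      exact h1 p hp (e1 ▸ hq)
    · intro p hp q hq hpq
      subst hpq
      rw [List.getLast?_append_of_ne_nil _ hne] at hp
      exact h2 p hq (e2 ▸ hp)
  | zero => simp
  | add z z' _ _ h h' => rw [mul_add, add_mul]; exact Submodule.add_mem _ h h'
  | smul c z _ h =>
    rw [mul_smul_comm, smul_mul_assoc]; exact Submodule.smul_mem _ c h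

theorem sandwich_Rem {u v : List S.I} {o o' : Option S.I} {x y r : S.A}
    (hu : S.Reduced u) (hv : S.Reduced v)
    (h1 : ∀ i ∈ u.getLast?, o ≠ some i) (h2 : ∀ i ∈ v.head?, o' ≠ some i)
    (hx : El u x) (hy : El v y) (hl : 1 ≤ u.length + v.length) (hr : r ∈ S.Sp o o') :
    x * r * y ∈ S.Rem := by
  refine Submodule.span_mono ?_ (sandwich hu hv h1 h2 hx hy hr)
  rintro z ⟨w, hne, hw, e1, e2, hz⟩
  refine ⟨_, hw, ?_, hz⟩
  have := List.length_pos_of_ne_nil hne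
  simp only [List.length_append]
  omega

theorem cons_facts {i : S.I} {u : List S.I} (h : S.Reduced (i :: u)) :
    S.Reduced u ∧ u.head? ≠ some i := by
  have := (Reduced_append (u := [i]) (v := u)).1 h
  refine ⟨this.2.1, fun e => ?_⟩
  exact this.2.2 i (by simp) i (by simp [e]) rfl

theorem snoc_facts {i : S.I} {u : List S.I} (h : S.Reduced (u ++ [i])) :
    S.Reduced u ∧ u.getLast? ≠ some i := by
  have := Reduced_append.1 h
  refine ⟨this.1, fun e => ?_⟩
  exact this.2.2 i (by simp [e]) i (by simp) rfl

theorem center {i : S.I} {z : S.A} (hz : z ∈ S.Ai i) : z - S.E z ∈ S.cent i := by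
  refine ⟨(S.Ai i).sub_mem hz (S.B_le i (S.E_mem z)), ?_⟩
  rw [map_sub, S.E_fix _ (S.E_mem z), sub_self]

theorem abc_mem {i : S.I} {a b c : S.A} (ha : a ∈ S.cent i) (hb : b ∈ S.B)
    (hc : c ∈ S.cent i) : a * b * c ∈ S.Ai i :=
  (S.Ai i).mul_mem ((S.Ai i).mul_mem ha.1 (S.B_le i hb)) hc.1

theorem Reduced_pair {i k : S.I} (h : i ≠ k) : S.Reduced [i, k] := by
  refine (Reduced_append (u := [i]) (v := [k])).2 ⟨Reduced_single i, Reduced_single k, ?_⟩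
  simpa using h

theorem El_abc {i k : S.I} {a b c : S.A} (ha : a ∈ S.cent i) (hb : b ∈ S.B)
    (hc : c ∈ S.cent k) : El [i, k] (a * b * c) :=
  El_append (u := [i]) (v := [k]) (El_single.2 (cent_mul_B ha hb)) (El_single.2 hc)

theorem mid (n : ℕ) : ∀ (u v : List S.I), u.length = n → v.length = n → S.Reduced u →
    S.Reduced v → ∀ x y : S.A, El u x → El v y →
    ∃ b ∈ S.B, (b = 0 ∨ v = u.reverse) ∧ x * y - b ∈ S.Sp u.head? v.getLast? := by
  induction n with
  | zero =>
    intro u v hu hv _ _ x y hx hy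
    rw [List.length_eq_zero_iff] at hu hv
    subst hu hv
    exact ⟨x * y, S.B.mul_mem hx hy, Or.inr rfl, by simp⟩
  | succ n ih =>
    intro u v hu hv ru rv x y hx hy
    cases u with
    | nil => simp at hu
    | cons i u =>
    rcases List.eq_nil_or_concat v with rfl | ⟨v, k, rfl⟩
    · simp at hv
    obtain ⟨a, ha, x, hx, rfl⟩ := hx
    simp only [List.concat_eq_append] at hv rv hy ⊢
    obtain ⟨y, c, hy1, hc, rfl⟩ := El_split hy
    have hc' := El_single.1 hc
    have hcu := cons_facts ru
    have hcv := snoc_facts rv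
    obtain ⟨b, hb, hb0, hr⟩ := ih u v (by simpa using hu) (by simpa using hv) hcu.1 hcv.1 x y hx hy1
    have key : a * (x * y - b) * c ∈ S.Sp (some i) (some k) := by
      refine Submodule.span_mono ?_ (sandwich (Reduced_single i) (Reduced_single k) ?_ ?_
        (El_single.2 ha) hc hr)
      · rintro z ⟨w, hne, hw, e1, e2, hz⟩
        exact ⟨_, by simp, hw, by simp, List.getLast?_concat, hz⟩
      · intro j hj
        simp at hj
        subst hj
        exact hcu.2
      · intro j hj
        simp at hj
        subst hj
        exact hcv.2
    have e : a * x * (y * c) = a * (x * y - b) * c + a * b * c := by noncomm_ring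
    simp only [List.head?_cons, List.getLast?_append, List.getLast?_singleton, Option.some_or]
    by_cases hik : i = k
    · subst hik
      rcases hb0 with rfl | hb0
      · refine ⟨0, S.B.zero_mem, Or.inl rfl, ?_⟩
        rw [e]
        simpa using key
      · refine ⟨S.E (a * b * c), S.E_mem _, Or.inr (by simp [hb0]), ?_⟩
        rw [e, add_sub_assoc]
        refine Submodule.add_mem _ key (Submodule.subset_span ⟨[i], by simp, Reduced_single i,
          by simp, by simp, El_single.2 (center (abc_mem ha hb hc'))⟩)
    · refine ⟨0, S.B.zero_mem, Or.inl rfl, ?_⟩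
      rw [e, sub_zero]
      exact Submodule.add_mem _ key (Submodule.subset_span ⟨[i, k], by simp, Reduced_pair hik,
          by simp, by simp, El_abc ha hb hc'⟩)

/-! Projections. -/

theorem P1_single {P1 : S.A →ₗ[ℂ] S.A} (hP : S.IsP1 P1) {i : S.I} {z : S.A}
    (hz : z ∈ S.cent i) : P1 z = z := by
  refine hP.1 z ?_
  exact Submodule.mem_iSup_of_mem [i] (Submodule.mem_iSup_of_mem ⟨rfl, Reduced_single i⟩
    (El_Wword (El_single.2 hz)))

theorem P1_El {P1 : S.A →ₗ[ℂ] S.A} (hP : S.IsP1 P1) {w : List S.I} (hw : S.Reduced w)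
    (hl : w.length ≠ 1) {z : S.A} (hz : El w z) : P1 z = 0 :=
  hP.2 _ hl z (Submodule.mem_iSup_of_mem w (Submodule.mem_iSup_of_mem ⟨rfl, hw⟩ (El_Wword hz)))

theorem P1_Rem {P1 : S.A →ₗ[ℂ] S.A} (hP : S.IsP1 P1) {z : S.A} (hz : z ∈ S.Rem) :
    P1 z = 0 := by
  induction hz using Submodule.span_induction with
  | mem z hz => obtain ⟨w, hw, hl, hz⟩ := hz; exact P1_El hP hw hl hz
  | zero => simp
  | add z z' _ _ h h' => rw [map_add, h, h', add_zero]
  | smul c z _ h => rw [map_smul, h, smul_zero]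

/-- Partial sum of word projections over words satisfying `p`. -/
noncomputable def F {Q : List S.I → S.A →ₗ[ℂ] S.A} (hQ : S.IsWordProj Q)
    (p : List S.I → Prop) : S.A →ₗ[ℂ] S.A where
  toFun z := ∑ᶠ w : List S.I, if p w then Q w z else 0
  map_add' x y := by
    rw [← finsum_add_distrib]
    · refine finsum_congr fun w => ?_
      split_ifs <;> simp
    · refine (hQ.2.2.2.1 x).subset fun w hw h0 => hw ?_
      simp only at h0 ⊢
      rw [h0, ite_self]
    · refine (hQ.2.2.2.1 y).subset fun w hw h0 => hw ?_
      simp only at h0 ⊢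
      rw [h0, ite_self]
  map_smul' c x := by
    rw [RingHom.id_apply, smul_finsum]
    refine finsum_congr fun w => ?_
    split_ifs <;> simp

theorem F_El {Q : List S.I → S.A →ₗ[ℂ] S.A} (hQ : S.IsWordProj Q)
    (p : List S.I → Prop) {w : List S.I} (hw : S.Reduced w) {z : S.A} (hz : El w z) :
    F hQ p z = if p w then z else 0 := by
  change (∑ᶠ w' : List S.I, if p w' then Q w' z else 0) = _
  rw [finsum_eq_single _ w, hQ.1 w hw z (El_Wword hz)]
  intro w' hne
  by_cases hr : S.Reduced w'
  · rw [hQ.2.1 w' w hr hw hne z (El_Wword hz), ite_self]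
  · rw [hQ.2.2.1 w' hr, LinearMap.zero_apply, ite_self]

theorem P1_F_Rem {P1 : S.A →ₗ[ℂ] S.A} (hP : S.IsP1 P1)
    {Q : List S.I → S.A →ₗ[ℂ] S.A} (hQ : S.IsWordProj Q)
    (p : List S.I → Prop) {z : S.A} (hz : z ∈ S.Rem) : P1 (F hQ p z) = 0 := by
  induction hz using Submodule.span_induction with
  | mem z hz =>
    obtain ⟨w, hw, hl, hz⟩ := hz
    rw [F_El hQ p hw hz]
    split_ifs
    · exact P1_El hP hw hl hz
    · simp
  | zero => simp
  | add z z' _ _ h h' => rw [map_add, map_add, h, h', add_zero]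
  | smul c z _ h => rw [map_smul, map_smul, h, smul_zero]

theorem dag10_eq {Q : List S.I → S.A →ₗ[ℂ] S.A} (hQ : S.IsWordProj Q) (x y : S.A) :
    S.dag10 Q x y =
      x * y - ∑ᶠ v : List S.I, F hQ (fun w => w.getLast? = v.getLast?) (x * Q v y) := by
  simp only [dag10, F, LinearMap.coe_mk, AddHom.coe_mk]
  congr!

theorem dag01_eq {Q : List S.I → S.A →ₗ[ℂ] S.A} (hQ : S.IsWordProj Q) (x y : S.A) :
    S.dag01 Q x y =
      x * y - ∑ᶠ u : List S.I, F hQ (fun w => w.head? = u.head?) (Q u x * y) := by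
  simp only [dag01, F, LinearMap.coe_mk, AddHom.coe_mk]
  congr!

theorem dag10_El {Q : List S.I → S.A →ₗ[ℂ] S.A} (hQ : S.IsWordProj Q) {v : List S.I}
    (hv : S.Reduced v) (x : S.A) {y : S.A} (hy : El v y) :
    S.dag10 Q x y = x * y - F hQ (fun w => w.getLast? = v.getLast?) (x * y) := by
  rw [dag10_eq hQ, finsum_eq_single _ v, hQ.1 v hv y (El_Wword hy)]
  intro w' hne
  by_cases hr : S.Reduced w'
  · rw [hQ.2.1 w' v hr hv hne y (El_Wword hy), mul_zero, map_zero]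
  · rw [hQ.2.2.1 w' hr, LinearMap.zero_apply, mul_zero, map_zero]

theorem dag01_El {Q : List S.I → S.A →ₗ[ℂ] S.A} (hQ : S.IsWordProj Q) {u : List S.I}
    (hu : S.Reduced u) {x : S.A} (y : S.A) (hx : El u x) :
    S.dag01 Q x y = x * y - F hQ (fun w => w.head? = u.head?) (x * y) := by
  rw [dag01_eq hQ, finsum_eq_single _ u, hQ.1 u hu x (El_Wword hx)]
  intro w' hne
  by_cases hr : S.Reduced w'
  · rw [hQ.2.1 w' u hr hu hne x (El_Wword hx), zero_mul, map_zero]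
  · rw [hQ.2.2.1 w' hr, LinearMap.zero_apply, zero_mul, map_zero]

/-! Linearity of the paraproducts. -/

theorem supp10 {Q : List S.I → S.A →ₗ[ℂ] S.A} (hQ : S.IsWordProj Q) (x y : S.A) :
    (Function.support fun v : List S.I =>
      F hQ (fun w => w.getLast? = v.getLast?) (x * Q v y)).Finite := by
  refine (hQ.2.2.2.1 y).subset fun w hw h0 => hw ?_
  simp only at h0 ⊢
  rw [h0, mul_zero, map_zero]

theorem supp01 {Q : List S.I → S.A →ₗ[ℂ] S.A} (hQ : S.IsWordProj Q) (x y : S.A) :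
    (Function.support fun u : List S.I =>
      F hQ (fun w => w.head? = u.head?) (Q u x * y)).Finite := by
  refine (hQ.2.2.2.1 x).subset fun w hw h0 => hw ?_
  simp only at h0 ⊢
  rw [h0, zero_mul, map_zero]

/-- `dag10` as a bilinear map. -/
noncomputable def dag10L {Q : List S.I → S.A →ₗ[ℂ] S.A} (hQ : S.IsWordProj Q) :
    S.A →ₗ[ℂ] S.A →ₗ[ℂ] S.A :=
  LinearMap.mk₂ ℂ (S.dag10 Q)
    (by
      intro x x' y
      simp only [dag10_eq hQ, add_mul, map_add]
      rw [finsum_add_distrib (supp10 hQ x y) (supp10 hQ x' y)]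
      abel)
    (by
      intro c x y
      simp only [dag10_eq hQ, smul_mul_assoc, map_smul]
      rw [← smul_finsum, smul_sub])
    (by
      intro x y y'
      simp only [dag10_eq hQ, mul_add, map_add]
      rw [finsum_add_distrib (supp10 hQ x y) (supp10 hQ x y')]
      abel)
    (by
      intro c x y
      simp only [dag10_eq hQ, mul_smul_comm, map_smul]
      rw [← smul_finsum, smul_sub])

/-- `dag01` as a bilinear map. -/
noncomputable def dag01L {Q : List S.I → S.A →ₗ[ℂ] S.A} (hQ : S.IsWordProj Q) :
    S.A →ₗ[ℂ] S.A →ₗ[ℂ] S.A :=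
  LinearMap.mk₂ ℂ (S.dag01 Q)
    (by
      intro x x' y
      simp only [dag01_eq hQ, add_mul, map_add]
      rw [finsum_add_distrib (supp01 hQ x y) (supp01 hQ x' y)]
      abel)
    (by
      intro c x y
      simp only [dag01_eq hQ, smul_mul_assoc, map_smul]
      rw [← smul_finsum, smul_sub])
    (by
      intro x y y'
      simp only [dag01_eq hQ, mul_add, map_add]
      rw [finsum_add_distrib (supp01 hQ x y) (supp01 hQ x y')]
      abel)
    (by
      intro c x y
      simp only [dag01_eq hQ, mul_smul_comm, map_smul]
      rw [← smul_finsum, smul_sub])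

/-! Length-one parts of the paraproducts on words. -/

section Parts

variable {P1 : S.A →ₗ[ℂ] S.A} (hP : S.IsP1 P1)
  {Q : List S.I → S.A →ₗ[ℂ] S.A} (hQ : S.IsWordProj Q)

theorem P1_of {i : S.I} {z z1 : S.A} (h1 : z1 ∈ S.cent i) (h2 : z - z1 ∈ S.Rem)
    (hP : S.IsP1 P1) : P1 z = z1 := by
  have := P1_Rem hP h2
  rw [map_sub, P1_single hP h1, sub_eq_zero] at this
  exact this

theorem P1_F_of (hP : S.IsP1 P1) (hQ : S.IsWordProj Q) (p : List S.I → Prop) {i : S.I}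
    {z z1 : S.A} (h1 : z1 ∈ S.cent i) (h2 : z - z1 ∈ S.Rem) :
    P1 (F hQ p z) = if p [i] then z1 else 0 := by
  have := P1_F_Rem hP hQ p h2
  rw [map_sub, map_sub, F_El hQ p (Reduced_single i) (El_single.2 h1), sub_eq_zero] at this
  rw [this]
  split_ifs
  · exact P1_single hP h1
  · simp

theorem P1_dag10_Rem (hP : S.IsP1 P1) (hQ : S.IsWordProj Q) {v : List S.I} (hv : S.Reduced v)
    {x y : S.A} (hy : El v y) (h : x * y ∈ S.Rem) : P1 (S.dag10 Q x y) = 0 := by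
  rw [dag10_El hQ hv x hy, map_sub, P1_Rem hP h, P1_F_Rem hP hQ _ h, sub_zero]

theorem P1_dag01_Rem (hP : S.IsP1 P1) (hQ : S.IsWordProj Q) {u : List S.I} (hu : S.Reduced u)
    {x y : S.A} (hx : El u x) (h : x * y ∈ S.Rem) : P1 (S.dag01 Q x y) = 0 := by
  rw [dag01_El hQ hu y hx, map_sub, P1_Rem hP h, P1_F_Rem hP hQ _ h, sub_zero]

theorem P1_dag10_same (hP : S.IsP1 P1) (hQ : S.IsWordProj Q) {v : List S.I} (hv : S.Reduced v)
    {x y : S.A} (hy : El v y) {i : S.I} {z1 : S.A} (h1 : z1 ∈ S.cent i)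
    (h2 : x * y - z1 ∈ S.Rem) (h : v.getLast? = some i) : P1 (S.dag10 Q x y) = 0 := by
  rw [dag10_El hQ hv x hy, map_sub, P1_of h1 h2 hP, P1_F_of hP hQ _ h1 h2, if_pos (by simp [h]),
    sub_self]

theorem P1_dag10_diff (hP : S.IsP1 P1) (hQ : S.IsWordProj Q) {v : List S.I} (hv : S.Reduced v)
    {x y : S.A} (hy : El v y) {i : S.I} {z1 : S.A} (h1 : z1 ∈ S.cent i)
    (h2 : x * y - z1 ∈ S.Rem) (h : z1 = 0 ∨ v.getLast? ≠ some i) :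
    P1 (S.dag10 Q x y) = z1 := by
  rw [dag10_El hQ hv x hy, map_sub, P1_of h1 h2 hP, P1_F_of hP hQ _ h1 h2]
  rcases h with rfl | h
  · rw [ite_self, sub_zero]
  · rw [if_neg, sub_zero]
    intro e
    exact h (by simpa using e.symm)

theorem P1_dag01_same (hP : S.IsP1 P1) (hQ : S.IsWordProj Q) {u : List S.I} (hu : S.Reduced u)
    {x y : S.A} (hx : El u x) {i : S.I} {z1 : S.A} (h1 : z1 ∈ S.cent i)
    (h2 : x * y - z1 ∈ S.Rem) (h : u.head? = some i) : P1 (S.dag01 Q x y) = 0 := by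
  rw [dag01_El hQ hu y hx, map_sub, P1_of h1 h2 hP, P1_F_of hP hQ _ h1 h2, if_pos (by simp [h]),
    sub_self]

theorem P1_dag01_diff (hP : S.IsP1 P1) (hQ : S.IsWordProj Q) {u : List S.I} (hu : S.Reduced u)
    {x y : S.A} (hx : El u x) {i : S.I} {z1 : S.A} (h1 : z1 ∈ S.cent i)
    (h2 : x * y - z1 ∈ S.Rem) (h : z1 = 0 ∨ u.head? ≠ some i) :
    P1 (S.dag01 Q x y) = z1 := by
  rw [dag01_El hQ hu y hx, map_sub, P1_of h1 h2 hP, P1_F_of hP hQ _ h1 h2]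
  rcases h with rfl | h
  · rw [ite_self, sub_zero]
  · rw [if_neg, sub_zero]
    intro e
    exact h (by simpa using e.symm)

end Parts

/-! Products of words. -/

theorem far_left {u v : List S.I} (hl : v.length + 2 ≤ u.length) (ru : S.Reduced u)
    (rv : S.Reduced v) {x y : S.A} (hx : El u x) (hy : El v y) : x * y ∈ S.Rem := by
  obtain ⟨u1, u2, rfl, h1, h2⟩ : ∃ u1 u2, u = u1 ++ u2 ∧ u2.length = v.length ∧ 2 ≤ u1.length :=
    ⟨u.take (u.length - v.length), u.drop (u.length - v.length), by simp,
      by simp; omega, by simp; omega⟩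
  obtain ⟨x1, x2, hx1, hx2, rfl⟩ := El_split hx
  have hr := Reduced_append.1 ru
  obtain ⟨b, hb, -, hs⟩ := mid _ u2 v h1 rfl hr.2.1 rv x2 y hx2 hy
  have e : x1 * x2 * y = x1 * (x2 * y - b) * 1 + x1 * b := by noncomm_ring
  rw [e]
  refine Submodule.add_mem _ (sandwich_Rem (v := []) hr.1 List.isChain_nil ?_ (by simp) hx1
    S.B.one_mem (by simp; omega) hs) ?_
  · intro i hi e
    exact hr.2.2 i hi i (by simp [e]) rfl
  · have := El_append (v := []) hx1 hb
    rw [List.append_nil] at this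
    exact El_Rem hr.1 (by omega) this

theorem far_right {u v : List S.I} (hl : u.length + 2 ≤ v.length) (ru : S.Reduced u)
    (rv : S.Reduced v) {x y : S.A} (hx : El u x) (hy : El v y) : x * y ∈ S.Rem := by
  obtain ⟨v1, v2, rfl, h1, h2⟩ : ∃ v1 v2, v = v1 ++ v2 ∧ v1.length = u.length ∧ 2 ≤ v2.length :=
    ⟨v.take u.length, v.drop u.length, by simp, by simp; omega, by simp; omega⟩
  obtain ⟨y1, y2, hy1, hy2, rfl⟩ := El_split hy
  have hr := Reduced_append.1 rv
  obtain ⟨b, hb, -, hs⟩ := mid _ u v1 rfl h1 ru hr.1 x y1 hx hy1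
  have e : x * (y1 * y2) = 1 * (x * y1 - b) * y2 + b * y2 := by noncomm_ring
  rw [e]
  refine Submodule.add_mem _ (sandwich_Rem (u := []) List.isChain_nil hr.2.1 (by simp) ?_
    S.B.one_mem hy2 (by simp; omega) hs) ?_
  · intro i hi e
    exact hr.2.2 i (by simp [e]) i hi rfl
  · exact El_Rem hr.2.1 (by omega) (El_B_mul hb hy2)

theorem near_left {i : S.I} {u v : List S.I} (hl : u.length = v.length) (ru : S.Reduced (i :: u))
    (rv : S.Reduced v) {x y : S.A} (hx : El u x) (hy : El v y) :
    ∃ b ∈ S.B, (b = 0 ∨ v.getLast? ≠ some i) ∧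
      ∀ a ∈ S.cent i, a * x * y - a * b ∈ S.Rem := by
  have hr := cons_facts ru
  obtain ⟨b, hb, h0, hs⟩ := mid _ u v hl rfl hr.1 rv x y hx hy
  refine ⟨b, hb, h0.imp_right ?_, ?_⟩
  · rintro rfl
    simpa using hr.2
  · intro a ha
    have e : a * x * y - a * b = a * (x * y - b) * 1 := by noncomm_ring
    rw [e]
    refine sandwich_Rem (v := []) (Reduced_single i) List.isChain_nil ?_ (by simp)
      (El_single.2 ha) S.B.one_mem (by simp) hs
    intro j hj
    simp at hj
    subst hj
    exact hr.2

theorem near_right {k : S.I} {u v : List S.I} (hl : u.length = v.length) (ru : S.Reduced u)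
    (rv : S.Reduced (v ++ [k])) {x y : S.A} (hx : El u x) (hy : El v y) :
    ∃ b ∈ S.B, (b = 0 ∨ u.head? ≠ some k) ∧
      ∀ c ∈ S.cent k, x * (y * c) - b * c ∈ S.Rem := by
  have hr := snoc_facts rv
  obtain ⟨b, hb, h0, hs⟩ := mid _ u v hl rfl ru hr.1 x y hx hy
  refine ⟨b, hb, h0.imp_right ?_, ?_⟩
  · rintro rfl
    simpa using hr.2
  · intro c hc
    have e : x * (y * c) - b * c = 1 * (x * y - b) * c := by noncomm_ring
    rw [e]
    refine sandwich_Rem (u := []) List.isChain_nil (Reduced_single k) (by simp) ?_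
      S.B.one_mem (El_single.2 hc) (by simp) hs
    intro j hj
    simp at hj
    subst hj
    exact hr.2

theorem equal_len {i k : S.I} {u v : List S.I} (hl : u.length = v.length)
    (ru : S.Reduced (i :: u)) (rv : S.Reduced (v ++ [k])) {x y : S.A} (hx : El u x)
    (hy : El v y) :
    ∃ b ∈ S.B, ∀ a ∈ S.cent i, ∀ c ∈ S.cent k, a * x * (y * c) - a * b * c ∈ S.Rem := by
  have hr := cons_facts ru
  have hr' := snoc_facts rv
  obtain ⟨b, hb, h0, hs⟩ := mid _ u v hl rfl hr.1 hr'.1 x y hx hy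
  refine ⟨b, hb, ?_⟩
  intro a ha c hc
  have e : a * x * (y * c) - a * b * c = a * (x * y - b) * c := by noncomm_ring
  rw [e]
  refine sandwich_Rem (Reduced_single i) (Reduced_single k) ?_ ?_
      (El_single.2 ha) (El_single.2 hc) (by simp) hs
  · intro j hj
    simp at hj
    subst hj
    exact hr.2
  · intro j hj
    simp at hj
    subst hj
    exact hr'.2

theorem Tpi_cent {P : S.RepFamily} {T : S.A →ₗ[ℂ] S.A} (hT : S.IsTpi P T) {i : S.I}
    {c : S.A} (hc : c ∈ S.cent i) : T c = P.π i c := by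
  have := Tpi_cons hT (Reduced_single i) hc (x := 1) (w := []) S.B.one_mem
  simpa using this

theorem opT_cent {P : S.RepFamily} {T : S.A →ₗ[ℂ] S.A} (hT : S.IsTpi P T) {i : S.I}
    {c : S.A} (hc : c ∈ S.cent i) : S.opConj T c = P.π i c := by
  have := opT_snoc hT (Reduced_single i) hc (y := 1) (v := []) S.B.one_mem
  simpa using this

theorem words_identity (P : S.RepFamily)
    (T : S.A →ₗ[ℂ] S.A) (hT : S.IsTpi P T)
    (P1 : S.A →ₗ[ℂ] S.A) (hP : S.IsP1 P1)
    (Q : List S.I → S.A →ₗ[ℂ] S.A) (hQ : S.IsWordProj Q)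
    {u v : List S.I} (ru : S.Reduced u) (rv : S.Reduced v) {g h : S.A}
    (hg : El u g) (hh : El v h) :
    P1 (T g * S.opConj T h) =
      T (P1 (S.dag10 Q g (S.opConj T h))) +
      S.opConj T (P1 (S.dag01 Q (T g) h)) +
      T (P1 (S.dag11 Q g h)) := by
  have hTg := Tpi_El hT ru hg
  have hTh := opT_El hT rv hh
  have triv : (∀ x y, El u x → El v y → x * y ∈ S.Rem) →
      P1 (T g * S.opConj T h) =
      T (P1 (S.dag10 Q g (S.opConj T h))) +
      S.opConj T (P1 (S.dag01 Q (T g) h)) +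
      T (P1 (S.dag11 Q g h)) := by
    intro H
    unfold dag11
    rw [map_sub P1, map_sub P1, P1_Rem hP (H _ _ hTg hTh), P1_Rem hP (H _ _ hg hh),
      P1_dag10_Rem hP hQ rv hTh (H _ _ hg hTh), P1_dag10_Rem hP hQ rv hh (H _ _ hg hh),
      P1_dag01_Rem hP hQ ru hg (H _ _ hg hh), P1_dag01_Rem hP hQ ru hTg (H _ _ hTg hh)]
    simp
  rcases le_or_gt (v.length + 2) u.length with h1 | h1
  · exact triv fun x y hx hy => far_left h1 ru rv hx hy
  rcases le_or_gt (u.length + 2) v.length with h2 | h2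
  · exact triv fun x y hx hy => far_right h2 ru rv hx hy
  rcases lt_trichotomy u.length v.length with h3 | h3 | h3
  · -- `v` is longer by one
    rcases List.eq_nil_or_concat v with rfl | ⟨v, k, rfl⟩
    · simp at h3
    simp only [List.concat_eq_append] at *
    have hl : u.length = v.length := by simp at h2 h3; omega
    obtain ⟨y, c, hy, hc, rfl⟩ := El_split hh
    have hc' := El_single.1 hc
    obtain ⟨b, hb, hb0, H⟩ := near_right hl ru rv hg hy
    obtain ⟨b', hb', hb0', H'⟩ := near_right hl ru rv hTg hy
    have hpc := pi_cent P hc'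
    rw [opT_snoc hT rv hc' hy] at hTh ⊢
    have z0 : ∀ {d : S.A} (e : S.A), (d = 0 ∨ u.head? ≠ some k) →
        (d * e = 0 ∨ u.head? ≠ some k) := fun e hd => hd.imp_left fun hd => by rw [hd, zero_mul]
    unfold dag11
    rw [map_sub P1, map_sub P1, P1_of (B_mul_cent hpc hb') (H' _ hpc) hP,
      P1_of (B_mul_cent hc' hb) (H _ hc') hP,
      P1_dag10_same hP hQ rv hTh (B_mul_cent hpc hb) (H _ hpc) (by simp),
      P1_dag10_same hP hQ rv hh (B_mul_cent hc' hb) (H _ hc') (by simp),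
      P1_dag01_diff hP hQ ru hg (B_mul_cent hc' hb) (H _ hc') (z0 c hb0),
      P1_dag01_diff hP hQ ru hTg (B_mul_cent hc' hb') (H' _ hc') (z0 c hb0'),
      opT_cent hT (B_mul_cent hc' hb'), P.map_mul k b' (S.B_le k hb') c hc'.1, P.fix_B k b' hb']
    simp
  · -- equal lengths
    cases u with
    | nil =>
      have : v = [] := List.length_eq_zero_iff.1 (by simpa using h3.symm)
      subst this
      exact triv fun x y hx hy => El_Rem (w := []) List.isChain_nil (by simp) (S.B.mul_mem hx hy)
    | cons i u =>
    rcases List.eq_nil_or_concat v with rfl | ⟨v, k, rfl⟩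
    · simp at h3
    simp only [List.concat_eq_append] at *
    have hl : u.length = v.length := by simpa using h3
    by_cases hik : i = k
    · subst hik
      obtain ⟨a, ha, x, hx, rfl⟩ := hg
      obtain ⟨y, c, hy, hc, rfl⟩ := El_split hh
      have hc' := El_single.1 hc
      have hpa := pi_cent P ha
      have hpc := pi_cent P hc'
      obtain ⟨b, hb, H⟩ := equal_len hl ru rv hx hy
      rw [opT_snoc hT rv hc' hy] at hTh ⊢
      rw [Tpi_cons hT ru ha hx] at hTg ⊢
      have K1 : ∀ a ∈ S.cent i, ∀ c ∈ S.cent i,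
          a * b * c - S.E (a * b * c) ∈ S.cent i :=
        fun a ha c hc => center (abc_mem ha hb hc)
      have K2 : ∀ a ∈ S.cent i, ∀ c ∈ S.cent i,
          a * x * (y * c) - (a * b * c - S.E (a * b * c)) ∈ S.Rem := by
        intro a ha c hc
        rw [← sub_add]
        exact Submodule.add_mem _ (H a ha c hc)
          (El_Rem (w := []) List.isChain_nil (by simp) (S.E_mem _))
      have hg' : El (i :: u) (a * x) := ⟨a, ha, x, hx, rfl⟩
      unfold dag11
      rw [map_sub P1, map_sub P1, P1_of (K1 _ hpa _ hpc) (K2 _ hpa _ hpc) hP,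
        P1_of (K1 _ ha _ hc') (K2 _ ha _ hc') hP,
        P1_dag10_same hP hQ rv hTh (K1 _ ha _ hpc) (K2 _ ha _ hpc) (by simp),
        P1_dag10_same hP hQ rv hh (K1 _ ha _ hc') (K2 _ ha _ hc') (by simp),
        P1_dag01_same hP hQ ru hg' (K1 _ ha _ hc') (K2 _ ha _ hc') (by simp),
        P1_dag01_same hP hQ ru hTg (K1 _ hpa _ hc') (K2 _ hpa _ hc') (by simp)]
      have hab : a * b ∈ S.Ai i := (S.Ai i).mul_mem ha.1 (S.B_le i hb)
      have e : P.π i (a * b * c) = P.π i a * b * P.π i c := by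
        rw [P.map_mul i _ hab c hc'.1, P.map_mul i a ha.1 b (S.B_le i hb), P.fix_B i b hb]
      have e2 := P.E_comm i _ (abc_mem ha hb hc')
      rw [e] at e2
      simp only [map_zero, sub_zero, zero_add]
      rw [Tpi_cent hT (K1 _ ha _ hc'), map_sub, e, P.fix_B i _ (S.E_mem _), e2]
    · refine triv fun x y hx hy => ?_
      obtain ⟨a, ha, x, hx, rfl⟩ := hx
      obtain ⟨y, c, hy1, hc, rfl⟩ := El_split hy
      have hc' := El_single.1 hc
      obtain ⟨b, hb, H⟩ := equal_len hl ru rv hx hy1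
      have := Submodule.add_mem _ (H a ha c hc')
        (El_Rem (Reduced_pair hik) (by simp) (El_abc ha hb hc'))
      rwa [sub_add_cancel] at this
  · -- `u` is longer by one
    cases u with
    | nil => simp at h3
    | cons i u =>
    have hl : u.length = v.length := by simp at h1 h3; omega
    obtain ⟨a, ha, x, hx, rfl⟩ := hg
    have hg' : El (i :: u) (a * x) := ⟨a, ha, x, hx, rfl⟩
    obtain ⟨b, hb, hb0, H⟩ := near_left hl ru rv hx hh
    obtain ⟨b', hb', hb0', H'⟩ := near_left hl ru rv hx hTh
    have hpa := pi_cent P ha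
    rw [Tpi_cons hT ru ha hx] at hTg ⊢
    have z0 : ∀ {d : S.A} (e : S.A), (d = 0 ∨ v.getLast? ≠ some i) →
        (e * d = 0 ∨ v.getLast? ≠ some i) :=
      fun e hd => hd.imp_left fun hd => by rw [hd, mul_zero]
    unfold dag11
    rw [map_sub P1, map_sub P1, P1_of (cent_mul_B hpa hb') (H' _ hpa) hP,
      P1_of (cent_mul_B ha hb) (H _ ha) hP,
      P1_dag10_diff hP hQ rv hTh (cent_mul_B ha hb') (H' _ ha) (z0 a hb0'),
      P1_dag10_diff hP hQ rv hh (cent_mul_B ha hb) (H _ ha) (z0 a hb0),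
      P1_dag01_same hP hQ ru hg' (cent_mul_B ha hb) (H _ ha) (by simp),
      P1_dag01_same hP hQ ru hTg (cent_mul_B hpa hb) (H _ hpa) (by simp),
      Tpi_cent hT (cent_mul_B ha hb'), P.map_mul i a ha.1 b' (S.B_le i hb'), P.fix_B i b' hb']
    simp

end Helpers

end AmalgSetting

open AmalgSetting in
/-- Lemma `cotlarle2`: for all `g, h ∈ W`,
`P_1(T_π(g) T_π^op(h)) = T_π[P_1(g †^{1,0} T_π^op(h))] + T_π^op[P_1(T_π(g) †^{0,1} h)]
+ T_π[P_1(g †^{1,1} h)]`. -/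
theorem length_one_cotlar_identity (S : AmalgSetting) (P : S.RepFamily)
    (Tpi : S.A →ₗ[ℂ] S.A) (hT : S.IsTpi P Tpi)
    (P1 : S.A →ₗ[ℂ] S.A) (hP : S.IsP1 P1)
    (Q : List S.I → S.A →ₗ[ℂ] S.A) (hQ : S.IsWordProj Q)
    (g h : S.A) :
    P1 (Tpi g * S.opConj Tpi h) =
      Tpi (P1 (S.dag10 Q g (S.opConj Tpi h))) +
      S.opConj Tpi (P1 (S.dag01 Q (Tpi g) h)) +
      Tpi (P1 (S.dag11 Q g h)) := by
  have a10 : ∀ x x' y, S.dag10 Q (x + x') y = S.dag10 Q x y + S.dag10 Q x' y :=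
    fun x x' y => (dag10L hQ).map_add₂ x x' y
  have b10 : ∀ x y y', S.dag10 Q x (y + y') = S.dag10 Q x y + S.dag10 Q x y' :=
    fun x y y' => ((dag10L hQ) x).map_add y y'
  have c10 : ∀ (c : ℂ) x y, S.dag10 Q (c • x) y = c • S.dag10 Q x y :=
    fun c x y => (dag10L hQ).map_smul₂ c x y
  have d10 : ∀ (c : ℂ) x y, S.dag10 Q x (c • y) = c • S.dag10 Q x y :=
    fun c x y => ((dag10L hQ) x).map_smul c y
  have a01 : ∀ x x' y, S.dag01 Q (x + x') y = S.dag01 Q x y + S.dag01 Q x' y :=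
    fun x x' y => (dag01L hQ).map_add₂ x x' y
  have b01 : ∀ x y y', S.dag01 Q x (y + y') = S.dag01 Q x y + S.dag01 Q x y' :=
    fun x y y' => ((dag01L hQ) x).map_add y y'
  have c01 : ∀ (c : ℂ) x y, S.dag01 Q (c • x) y = c • S.dag01 Q x y :=
    fun c x y => (dag01L hQ).map_smul₂ c x y
  have d01 : ∀ (c : ℂ) x y, S.dag01 Q x (c • y) = c • S.dag01 Q x y :=
    fun c x y => ((dag01L hQ) x).map_smul c y
  have z10 : ∀ y, S.dag10 Q 0 y = 0 := fun y => (dag10L hQ).map_zero₂ y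
  have z01 : ∀ y, S.dag01 Q 0 y = 0 := fun y => (dag01L hQ).map_zero₂ y
  have y10 : ∀ x, S.dag10 Q x 0 = 0 := fun x => ((dag10L hQ) x).map_zero
  have y01 : ∀ x, S.dag01 Q x 0 = 0 := fun x => ((dag01L hQ) x).map_zero
  induction mem_span_El g using Submodule.span_induction with
  | mem g hg =>
    obtain ⟨u, ru, hg⟩ := hg
    induction mem_span_El h using Submodule.span_induction with
    | mem h hh =>
      obtain ⟨v, rv, hh⟩ := hh
      exact words_identity P Tpi hT P1 hP Q hQ ru rv hg hh
    | zero => simp [dag11, y10, y01]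
    | add z z' _ _ h h' =>
      simp only [dag11, map_add, map_sub, b10, b01, mul_add] at h h' ⊢
      rw [h, h']
      abel
    | smul c z _ h =>
      simp only [dag11, map_smul, map_sub, d10, d01, mul_smul_comm] at h ⊢
      rw [h]
      simp only [smul_add, smul_sub]
  | zero => simp [dag11, z10, z01]
  | add z z' _ _ h h' =>
    simp only [dag11, map_add, map_sub, a10, a01, add_mul] at h h' ⊢
    rw [h, h']
    abel
  | smul c z _ h =>
    simp only [dag11, map_smul, map_sub, c10, c01, smul_mul_assoc] at h ⊢
    rw [h]
    simp only [smul_add, smul_sub]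
end
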